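/- Given M₀, E₀ > 0 with α < E₀/M₀ < β, there exist parameters (μ,ν) with μω+ν > 0 a.e. such that the Rayleigh-Jeans equilibrium R_{μ,ν} = 1/(μω+ν) satisfies M(R_{μ,ν}) = M₀ and E(R_{μ,ν}) = E₀, and such (μ,ν) is unique. -/

import Mathlib

/-!
Put `V = (2π)^d`, `c = E₀ / M₀`, `u = ω - c` and `k = V / M₀`. Integrating
`(μω + ν) * (μω + ν)⁻¹ = 1` gives `μ E₀ + ν M₀ = V`, so every solution has the form
`μω + ν = k + μ u`, and the remaining condition is `∫ u / (k + μ u) = 0`. The theorem is thus a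
statement about the zeros of the one-variable function `g(t) = ∫ u / (1 + t u)`, where `μ = k t`.

*Uniqueness.* `g` is strictly decreasing: for two zeros with denominators `f₁`, `f₂`, the
difference of the integrands is a nonzero multiple of `u² / (f₁ f₂)`, so `u = 0` almost everywhere, and `ω` would be constant
(`ae_eq_zero_of_integral_eq`).

*Existence.* `g` is continuous on the open interval `(-1/(1-c), 1/(c-a))`, where `1 + t u` stays
positive on the whole torus (`continuousOn_integral_div`), so it suffices to find points where it is negative and positive.
The identity `∫ (1 + t u)⁻¹ = V - t g(t)` shows that if `g ≥ 0` on `[0, 1/(c-a))`, then these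
integrals are at most `V`; by Fatou's lemma `(c - a) ∫ (ω - a)⁻¹ ≤ V`, which contradicts `α < c`
(`exists_integral_div_neg`). Applying the same lemma to `-u` gives a positive value from `c < β`.
-/

open MeasureTheory Real Filter Topology Set

noncomputable section

instance : Fact (0 < 2 * π) := ⟨by positivity⟩

/-- The d-dimensional torus ℝ^d/(2πℤ)^d, with Lebesgue (Haar) measure of total mass (2π)^d. -/
abbrev Torus (d : ℕ) := Fin d → AddCircle (2 * π)

/-! ### Zeros of the integral of `u / (1 + t u)` -/

section Aux

variable {X : Type*} [TopologicalSpace X] [CompactSpace X] [MeasurableSpace X]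
  [OpensMeasurableSpace X] {m : Measure X} [IsFiniteMeasure m]

lemma one_add_mul_pos {A B t x : ℝ} (hxA : -A ≤ x) (hxB : x ≤ B)
    (ht1 : t * A < 1) (ht2 : -1 < t * B) : 0 < 1 + t * x := by
  rcases le_total 0 t with h | h
  · nlinarith
  · nlinarith

lemma integrable_of_continuous_compact {f : X → ℝ} (hf : Continuous f) : Integrable f m := by
  obtain ⟨C, hC⟩ := (isCompact_range hf).isBounded.exists_norm_le
  exact Integrable.of_bound hf.measurable.aestronglyMeasurable C
    (Eventually.of_forall fun x => hC _ ⟨x, rfl⟩)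

/-- The identity `1 / (1 + t u) = 1 - t * (u / (1 + t u))`, integrated. -/
lemma integral_inv_eq {u : X → ℝ} (hu : Continuous u) {t : ℝ} (hpos : ∀ x, 0 < 1 + t * u x) :
    ∫ x, (1 + t * u x)⁻¹ ∂m = m.real univ - t * ∫ x, u x / (1 + t * u x) ∂m := by
  have hne : ∀ x, 1 + t * u x ≠ 0 := fun x => (hpos x).ne'
  have hi : Integrable (fun x => u x / (1 + t * u x)) m :=
    integrable_of_continuous_compact (hu.div (by fun_prop) hne)
  have h1 : ∀ x, (1 + t * u x)⁻¹ = 1 - t * (u x / (1 + t * u x)) := fun x => by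
    have := hne x
    field_simp
    ring
  simp_rw [h1]
  rw [integral_sub (integrable_const _) (hi.const_mul t), integral_const_mul]
  simp

lemma continuousOn_integral_div {u : X → ℝ} (hu : Continuous u) {A B : ℝ} (hA : 0 < A)
    (hB : 0 < B) (huA : ∀ x, -A ≤ u x) (huB : ∀ x, u x ≤ B) {s r : ℝ}
    (hs : -1 < s * B) (hr : r * A < 1) :
    ContinuousOn (fun t => ∫ x, u x / (1 + t * u x) ∂m) (Icc s r) := by
  have hpos : ∀ t ∈ Icc s r, ∀ x, 0 < 1 + t * u x := fun t ht x =>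
    one_add_mul_pos (huA x) (huB x) (by nlinarith [ht.2]) (by nlinarith [ht.1])
  have hcont : ContinuousOn (fun p : ℝ × X => u p.2 / (1 + p.1 * u p.2)) (Icc s r ×ˢ univ) := by
    apply ContinuousOn.div
    · fun_prop
    · fun_prop
    · rintro ⟨t, x⟩ h
      exact (hpos t h.1 x).ne'
  obtain ⟨C, hC⟩ := ((isCompact_Icc.prod isCompact_univ).image_of_continuousOn
    hcont).isBounded.exists_norm_le
  refine continuousOn_of_dominated (bound := fun _ => C) ?_ ?_ (integrable_const _) ?_
  · intro t ht
    exact (hu.div (by fun_prop) fun x => (hpos t ht x).ne').measurable.aestronglyMeasurable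
  · intro t ht
    exact Eventually.of_forall fun x => hC _ ⟨(t, x), ⟨ht, mem_univ _⟩, rfl⟩
  · refine Eventually.of_forall fun x => ?_
    exact ContinuousOn.div (by fun_prop) (by fun_prop) fun t ht => (hpos t ht x).ne'

/-- If `1 / (A + u)` is either not integrable or has integral larger than `m(X) / A`, then
`∫ u / (1 + t u)` becomes negative as `t` increases to `1 / A`. Otherwise Fatou's lemma would bound
`∫ A / (A + u)` by `m(X)`. -/
lemma exists_integral_div_neg {u : X → ℝ} (hu : Continuous u) {A : ℝ} (hA : 0 < A)
    (huA : ∀ x, -A ≤ u x) (hnull : m {x | u x = -A} = 0)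
    (h : Integrable (fun x => (A + u x)⁻¹) m → m.real univ < A * ∫ x, (A + u x)⁻¹ ∂m) :
    ∃ t, 0 ≤ t ∧ t * A < 1 ∧ ∫ x, u x / (1 + t * u x) ∂m < 0 := by
  by_contra! hcon
  let t : ℕ → ℝ := fun n => (1 - 1 / ((n : ℝ) + 1)) / A
  have ht0 : ∀ n, 0 ≤ t n := fun n => by
    apply div_nonneg _ hA.le
    rw [sub_nonneg, div_le_one (by positivity)]
    linarith [(Nat.cast_nonneg n : (0 : ℝ) ≤ n)]
  have ht1 : ∀ n, t n * A < 1 := fun n => by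
    simp only [t]
    rw [div_mul_cancel₀ _ hA.ne']
    have : 0 < 1 / ((n : ℝ) + 1) := by positivity
    linarith
  have htlim : Tendsto t atTop (𝓝 A⁻¹) := by
    have := (tendsto_one_div_add_atTop_nhds_zero_nat (𝕜 := ℝ)).const_sub 1 |>.div_const A
    simpa [t] using this
  have hpos : ∀ n x, 0 < 1 + t n * u x := fun n x => by nlinarith [ht0 n, ht1 n, huA x]
  have hle : ∀ n, ∫⁻ x, ENNReal.ofReal ((1 + t n * u x)⁻¹) ∂m ≤ ENNReal.ofReal (m.real univ) := by
    intro n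
    rw [← ofReal_integral_eq_lintegral_ofReal]
    · apply ENNReal.ofReal_le_ofReal
      rw [integral_inv_eq hu (hpos n)]
      have := mul_nonneg (ht0 n) (hcon (t n) (ht0 n) (ht1 n))
      linarith
    · exact integrable_of_continuous_compact (Continuous.inv₀ (by fun_prop) fun x => (hpos n x).ne')
    · exact Eventually.of_forall fun x => (inv_pos.2 (hpos n x)).le
  have hae : ∀ᵐ x ∂m, 0 < A + u x := by
    have : ∀ᵐ x ∂m, ¬ (u x = -A) := by rw [ae_iff]; simpa using hnull
    filter_upwards [this] with x hx
    have := lt_of_le_of_ne (huA x) (Ne.symm hx)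
    linarith
  have hfatou : ∫⁻ x, ENNReal.ofReal (A * (A + u x)⁻¹) ∂m ≤ ENNReal.ofReal (m.real univ) := by
    calc ∫⁻ x, ENNReal.ofReal (A * (A + u x)⁻¹) ∂m
        = ∫⁻ x, liminf (fun n => ENNReal.ofReal ((1 + t n * u x)⁻¹)) atTop ∂m := by
          apply lintegral_congr_ae
          filter_upwards [hae] with x hx
          have heq : A * (A + u x)⁻¹ = (1 + A⁻¹ * u x)⁻¹ := by
            have := hx.ne'
            have h2 : 1 + A⁻¹ * u x = (A + u x) / A := by field_simp
            rw [h2, inv_div, div_eq_mul_inv]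
          have hne : 1 + A⁻¹ * u x ≠ 0 := by
            intro h0
            rw [h0, inv_zero] at heq
            exact (mul_pos hA (inv_pos.2 hx)).ne' heq
          rw [heq]
          refine (Tendsto.liminf_eq ?_).symm
          refine ENNReal.tendsto_ofReal (Tendsto.inv₀ ?_ hne)
          exact (htlim.mul_const _).const_add 1
      _ ≤ liminf (fun n => ∫⁻ x, ENNReal.ofReal ((1 + t n * u x)⁻¹) ∂m) atTop := by
          apply lintegral_liminf_le
          intro n
          have := hu.measurable
          fun_prop
      _ ≤ ENNReal.ofReal (m.real univ) :=
          liminf_le_of_le (by isBoundedDefault) fun b hb => by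
            obtain ⟨n, hn⟩ := hb.exists
            exact hn.trans (hle n)
  have hnn : 0 ≤ᵐ[m] fun x => A * (A + u x)⁻¹ := by
    filter_upwards [hae] with x hx
    exact (mul_pos hA (inv_pos.2 hx)).le
  have hmeas : AEStronglyMeasurable (fun x => A * (A + u x)⁻¹) m := by
    have := hu.measurable
    apply Measurable.aestronglyMeasurable
    fun_prop
  have hfi : Integrable (fun x => A * (A + u x)⁻¹) m :=
    (lintegral_ofReal_ne_top_iff_integrable hmeas hnn).1
      (ne_top_of_le_ne_top ENNReal.ofReal_ne_top hfatou)
  have hAint : Integrable (fun x => (A + u x)⁻¹) m := by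
    have := hfi.const_mul A⁻¹
    simpa [← mul_assoc, inv_mul_cancel₀ hA.ne'] using this
  have hlt := h hAint
  rw [← ofReal_integral_eq_lintegral_ofReal hfi hnn,
    ENNReal.ofReal_le_ofReal_iff measureReal_nonneg, integral_const_mul] at hfatou
  linarith

/-- A zero of `∫ u / (1 + t u)` at an interior parameter `t`. -/
lemma exists_integral_div_eq_zero {u : X → ℝ} (hu : Continuous u) {A B : ℝ} (hA : 0 < A)
    (hB : 0 < B) (huA : ∀ x, -A ≤ u x) (huB : ∀ x, u x ≤ B)
    (hnA : m {x | u x = -A} = 0) (hnB : m {x | u x = B} = 0)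
    (h1 : Integrable (fun x => (A + u x)⁻¹) m → m.real univ < A * ∫ x, (A + u x)⁻¹ ∂m)
    (h2 : Integrable (fun x => (B - u x)⁻¹) m → m.real univ < B * ∫ x, (B - u x)⁻¹ ∂m) :
    ∃ t, t * A < 1 ∧ -1 < t * B ∧ ∫ x, u x / (1 + t * u x) ∂m = 0 := by
  obtain ⟨r, hr0, hr1, hr⟩ := exists_integral_div_neg hu hA huA hnA h1
  obtain ⟨s, hs0, hs1, hs⟩ := exists_integral_div_neg (m := m) (u := fun x => -u x) hu.neg hB
    (fun x => neg_le_neg (huB x)) (by simpa using hnB) (by simpa [← sub_eq_add_neg] using h2)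
  have hs' : 0 < ∫ x, u x / (1 + (-s) * u x) ∂m := by
    have : ∀ x, -u x / (1 + s * -u x) = -(u x / (1 + (-s) * u x)) := fun x => by
      rw [neg_div, mul_neg, neg_mul]
    simp_rw [this] at hs
    rw [integral_neg] at hs
    linarith
  have hc := continuousOn_integral_div (m := m) hu hA hB huA huB (s := -s) (r := r)
    (by linarith) hr1
  obtain ⟨t, ht, h0⟩ := intermediate_value_Icc' (by linarith) hc ⟨hr.le, hs'.le⟩
  exact ⟨t, by nlinarith [ht.2], by nlinarith [ht.1], h0⟩

/-! ### Uniqueness and the threshold integrals -/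

/-- Strict monotonicity of `p ↦ ∫ u / (k + p u)`, in the form needed for uniqueness. -/
lemma ae_eq_zero_of_integral_eq {Y : Type*} [MeasurableSpace Y] {n : Measure Y} {u : Y → ℝ}
    {k p q : ℝ} (hpq : p ≠ q) (hp : ∀ᵐ x ∂n, 0 < k + p * u x) (hq : ∀ᵐ x ∂n, 0 < k + q * u x)
    (hip : Integrable (fun x => u x * (k + p * u x)⁻¹) n)
    (hiq : Integrable (fun x => u x * (k + q * u x)⁻¹) n)
    (h : ∫ x, u x * (k + p * u x)⁻¹ ∂n = ∫ x, u x * (k + q * u x)⁻¹ ∂n) :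
    ∀ᵐ x ∂n, u x = 0 := by
  have hne : q - p ≠ 0 := sub_ne_zero.2 hpq.symm
  let F : Y → ℝ := fun x => (q - p)⁻¹ * (u x * (k + p * u x)⁻¹ - u x * (k + q * u x)⁻¹)
  have hF : ∀ᵐ x ∂n, F x = u x ^ 2 * ((k + p * u x)⁻¹ * (k + q * u x)⁻¹) := by
    filter_upwards [hp, hq] with x h1 h2
    have h1' := h1.ne'
    have h2' := h2.ne'
    simp only [F]
    field_simp
    ring
  have hFint : Integrable F n := (hip.sub hiq).const_mul _
  have hF0 : ∫ x, F x ∂n = 0 := by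
    simp only [F]
    rw [integral_const_mul, integral_sub hip hiq, h, sub_self, mul_zero]
  have hFnn : 0 ≤ᵐ[n] F := by
    filter_upwards [hp, hq, hF] with x h1 h2 h3
    rw [Pi.zero_apply, h3]
    positivity
  have hz := (integral_eq_zero_iff_of_nonneg_ae hFnn hFint).1 hF0
  filter_upwards [hp, hq, hF, hz] with x h1 h2 h3 h4
  rw [h3, Pi.zero_apply] at h4
  have h5 : (k + p * u x)⁻¹ * (k + q * u x)⁻¹ ≠ 0 := by positivity
  exact pow_eq_zero_iff (two_ne_zero) |>.1 ((mul_eq_zero.1 h4).resolve_right h5)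

/-- The threshold inequality `V * (∫ f⁻¹)⁻¹ < A`, rewritten without inverses. The integral of `f⁻¹`
is positive because `f` vanishes only on a null set. -/
lemma measure_lt_mul_integral_inv {Y : Type*} [MeasurableSpace Y] {n : Measure Y} [NeZero n]
    {f : Y → ℝ} (hf : ∀ x, 0 ≤ f x) (hnull : n {x | f x = 0} = 0)
    (hi : Integrable (fun x => (f x)⁻¹) n) {V A : ℝ} (h : V * (∫ x, (f x)⁻¹ ∂n)⁻¹ < A) :
    V < A * ∫ x, (f x)⁻¹ ∂n := by
  have hnn : 0 ≤ ∫ x, (f x)⁻¹ ∂n := integral_nonneg fun x => inv_nonneg.2 (hf x)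
  have hI : 0 < ∫ x, (f x)⁻¹ ∂n := by
    refine lt_of_le_of_ne hnn fun h0 => ?_
    have hz := (integral_eq_zero_iff_of_nonneg (fun x => inv_nonneg.2 (hf x)) hi).1 h0.symm
    have hcon : ∀ᵐ x ∂n, ¬ (f x = 0) := by rw [ae_iff]; simpa using hnull
    have : ∀ᵐ x ∂n, False := by
      filter_upwards [hz, hcon] with x h1 h2
      exact h2 (inv_eq_zero.1 h1)
    obtain ⟨x, hx⟩ := this.exists
    exact hx
  rwa [← div_eq_mul_inv, div_lt_iff₀ hI] at h

end Aux

/-! ### The equilibrium on the torus -/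

lemma torus_measureReal (d : ℕ) : (volume : Measure (Torus d)).real univ = (2 * π) ^ d := by
  rw [measureReal_def, volume_pi, Measure.pi_univ]
  simp [AddCircle.measure_univ, ENNReal.toReal_ofReal, Real.pi_pos.le]

open Classical in
theorem rayleigh_jeans_exists_unique (d : ℕ) (a : ℝ) (ha : 0 < a) (ha1 : a < 1)
    (ω : Torus d → ℝ) (hω : Continuous ω) (hrange : ∀ p, ω p ∈ Icc a 1)
    (hmin : ∃ p, ω p = a) (hmax : ∃ p, ω p = 1)
    (hminnull : volume {p | ω p = a} = 0) (hmaxnull : volume {p | ω p = 1} = 0)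
    (α β : ℝ)
    (hα : α = if Integrable (fun p => (ω p - a)⁻¹) then
        a + (2 * π) ^ d * (∫ p, (ω p - a)⁻¹)⁻¹ else a)
    (hβ : β = if Integrable (fun p => (1 - ω p)⁻¹) then
        1 - (2 * π) ^ d * (∫ p, (1 - ω p)⁻¹)⁻¹ else 1)
    (M₀ E₀ : ℝ) (hM₀ : 0 < M₀) (hE₀ : 0 < E₀)
    (hlow : α < E₀ / M₀) (hhigh : E₀ / M₀ < β) :
    ∃! μν : ℝ × ℝ,
      (((0 ≤ μν.2 ∧ -μν.2 ≤ μν.1) ∨ (μν.2 ≤ 0 ∧ -μν.2 / a ≤ μν.1)) ∧ μν ≠ (0, 0)) ∧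
      (∀ᵐ p, 0 < μν.1 * ω p + μν.2) ∧
      Integrable (fun p => (μν.1 * ω p + μν.2)⁻¹) ∧
      (∫ p, (μν.1 * ω p + μν.2)⁻¹) = M₀ ∧
      (∫ p, ω p * (μν.1 * ω p + μν.2)⁻¹) = E₀ := by
  have hVreal := torus_measureReal d
  set V : ℝ := (2 * π) ^ d with hV
  have hVpos : 0 < V := by positivity
  have : NeZero (volume : Measure (Torus d)) := ⟨fun h0 => by
    rw [h0] at hVreal
    simp at hVreal
    exact hVpos.ne hVreal⟩
  set c : ℝ := E₀ / M₀ with hc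
  have hcM : c * M₀ = E₀ := div_mul_cancel₀ _ hM₀.ne'
  have haα : a ≤ α := by
    rw [hα]
    split_ifs
    · have : 0 ≤ ∫ p, (ω p - a)⁻¹ :=
        integral_nonneg fun p => inv_nonneg.2 (sub_nonneg.2 (hrange p).1)
      have : 0 ≤ V * (∫ p, (ω p - a)⁻¹)⁻¹ := by positivity
      linarith
    · exact le_rfl
  have hβ1 : β ≤ 1 := by
    rw [hβ]
    split_ifs
    · have : 0 ≤ ∫ p, (1 - ω p)⁻¹ :=
        integral_nonneg fun p => inv_nonneg.2 (sub_nonneg.2 (hrange p).2)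
      have : 0 ≤ V * (∫ p, (1 - ω p)⁻¹)⁻¹ := by positivity
      linarith
    · exact le_rfl
  have hA : 0 < c - a := by linarith
  have hB : 0 < 1 - c := by linarith
  have hωf : ∀ {f : Torus d → ℝ}, Integrable f → Integrable (fun p => ω p * f p) :=
    fun hf => hf.bdd_mul (c := 1) hω.measurable.aestronglyMeasurable
      (Eventually.of_forall fun p => by
        rw [Real.norm_eq_abs, abs_le]
        constructor <;> linarith [(hrange p).1, (hrange p).2])
  set k : ℝ := V / M₀ with hk
  have hkpos : 0 < k := by positivity
  have hkM : k * M₀ = V := div_mul_cancel₀ _ hM₀.ne'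
  apply existsUnique_of_exists_of_unique
  · -- The solution is `μω + ν = k (1 + t (ω - c))`, with `t` a zero of `∫ u / (1 + t u)`.
    obtain ⟨t, ht1, ht2, ht⟩ := exists_integral_div_eq_zero (m := (volume : Measure (Torus d)))
      (u := fun p => ω p - c) (by fun_prop) hA hB
      (fun p => by linarith [(hrange p).1]) (fun p => by linarith [(hrange p).2])
      (by simpa [sub_eq_iff_eq_add] using hminnull)
      (by simpa using hmaxnull)
      (by
        have e : ∀ p, c - a + (ω p - c) = ω p - a := fun p => by ring
        simp only [e, hVreal]
        intro hi
        rw [if_pos hi] at hα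
        exact measure_lt_mul_integral_inv (fun p => sub_nonneg.2 (hrange p).1)
          (by simpa [sub_eq_zero] using hminnull) hi (by linarith))
      (by
        have e : ∀ p, 1 - c - (ω p - c) = 1 - ω p := fun p => by ring
        simp only [e, hVreal]
        intro hi
        rw [if_pos hi] at hβ
        exact measure_lt_mul_integral_inv (fun p => sub_nonneg.2 (hrange p).2)
          (by simpa only [sub_eq_zero, eq_comm (a := (1 : ℝ))] using hmaxnull) hi (by linarith))
    have hpos : ∀ x ∈ Icc a 1, 0 < 1 + t * (x - c) := fun x hx =>
      one_add_mul_pos (by linarith [hx.1]) (by linarith [hx.2]) ht1 ht2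
    have hM := integral_inv_eq (m := (volume : Measure (Torus d)))
      (u := fun p => ω p - c) (by fun_prop) (fun p => hpos _ (hrange p))
    rw [ht, mul_zero, sub_zero, hVreal] at hM
    have heq : ∀ x, k * t * x + k * (1 - t * c) = k * (1 + t * (x - c)) := fun x => by ring
    have hfi : Integrable (fun p => (k * (1 + t * (ω p - c)))⁻¹) :=
      integrable_of_continuous_compact (Continuous.inv₀ (by fun_prop)
        fun p => (mul_pos hkpos (hpos _ (hrange p))).ne')
    have hfM : ∫ p, (k * (1 + t * (ω p - c)))⁻¹ = M₀ := by
      simp_rw [mul_inv]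
      rw [integral_const_mul, hM, hk]
      field_simp
    refine ⟨(k * t, k * (1 - t * c)), ⟨?_, ?_⟩, ?_⟩
    · have h1 := mul_pos hkpos (hpos 1 ⟨ha1.le, le_rfl⟩)
      have h2 := mul_pos hkpos (hpos a ⟨le_rfl, ha1.le⟩)
      rw [← heq] at h1 h2
      rcases le_total 0 (k * (1 - t * c)) with h | h
      · left
        exact ⟨h, by simp only; linarith⟩
      · right
        refine ⟨h, ?_⟩
        simp only
        rw [div_le_iff₀ ha]
        linarith
    · intro h
      have h1 := mul_pos hkpos (hpos 1 ⟨ha1.le, le_rfl⟩)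
      rw [← heq, (Prod.mk.inj h).1, (Prod.mk.inj h).2] at h1
      simp at h1
    · simp only [heq]
      refine ⟨Eventually.of_forall fun p => mul_pos hkpos (hpos _ (hrange p)), hfi, hfM, ?_⟩
      have e : ∀ p, ω p * (k * (1 + t * (ω p - c)))⁻¹
          = c * (k * (1 + t * (ω p - c)))⁻¹ + k⁻¹ * ((ω p - c) / (1 + t * (ω p - c))) :=
        fun p => by
          rw [mul_inv]
          ring
      simp_rw [e]
      have hi2 : Integrable (fun p => (ω p - c) / (1 + t * (ω p - c))) :=
        integrable_of_continuous_compact (Continuous.div (by fun_prop) (by fun_prop)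
          fun p => (hpos _ (hrange p)).ne')
      rw [integral_add (hfi.const_mul c) (hi2.const_mul _), integral_const_mul,
        integral_const_mul, hfM, ht, mul_zero, add_zero, hcM]
  · -- Every solution has the form `k + μ (ω - c)` and annihilates `ω - c`.
    have key : ∀ μ ν : ℝ, (∀ᵐ p, 0 < μ * ω p + ν) → Integrable (fun p => (μ * ω p + ν)⁻¹) →
        (∫ p, (μ * ω p + ν)⁻¹) = M₀ → (∫ p, ω p * (μ * ω p + ν)⁻¹) = E₀ →
        ν = k - μ * c ∧ (∀ᵐ p, 0 < k + μ * (ω p - c)) ∧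
        Integrable (fun p => (ω p - c) * (k + μ * (ω p - c))⁻¹) ∧
        ∫ p, (ω p - c) * (k + μ * (ω p - c))⁻¹ = 0 := by
      intro μ ν hp hi hMi hEi
      have hsum : μ * E₀ + ν * M₀ = V := by
        rw [← hMi, ← hEi, ← integral_const_mul, ← integral_const_mul,
          ← integral_add ((hωf hi).const_mul _) (hi.const_mul _)]
        have : (fun p => μ * (ω p * (μ * ω p + ν)⁻¹) + ν * (μ * ω p + ν)⁻¹)
            =ᵐ[volume] fun _ => (1 : ℝ) := by
          filter_upwards [hp] with p h
          have := h.ne'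
          field_simp
        rw [integral_congr_ae this]
        simp [hVreal]
      have hν : ν = k - μ * c := by
        have : (ν - (k - μ * c)) * M₀ = 0 := by
          linear_combination hsum - hkM + μ * hcM
        rcases mul_eq_zero.1 this with h | h
        · linarith
        · exact absurd h hM₀.ne'
      have e : ∀ p, μ * ω p + ν = k + μ * (ω p - c) := fun p => by rw [hν]; ring
      simp only [e] at hp hi hMi hEi
      refine ⟨hν, hp, ?_, ?_⟩
      · simp_rw [sub_mul]
        exact (hωf hi).sub (hi.const_mul c)
      · simp_rw [sub_mul]
        have := integral_sub (hωf hi) (hi.const_mul c)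
        rw [integral_const_mul, hMi, hEi, hcM, sub_self] at this
        simpa [mul_sub] using this
    rintro ⟨μ₁, ν₁⟩ ⟨μ₂, ν₂⟩ ⟨-, hp1, hi1, hM1, hE1⟩ ⟨-, hp2, hi2, hM2, hE2⟩
    obtain ⟨e1, p1, i1, z1⟩ := key μ₁ ν₁ hp1 hi1 hM1 hE1
    obtain ⟨e2, p2, i2, z2⟩ := key μ₂ ν₂ hp2 hi2 hM2 hE2
    by_cases hne : μ₁ = μ₂
    · rw [e1, e2, hne]
    · exfalso
      have hz := ae_eq_zero_of_integral_eq hne p1 p2 i1 i2 (z1.trans z2.symm)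
      have hae : ω =ᵐ[volume] fun _ => c := by
        filter_upwards [hz] with p h
        linarith
      have hconst := (Continuous.ae_eq_iff_eq volume hω continuous_const).1 hae
      obtain ⟨p, hpa⟩ := hmin
      have := congrFun hconst p
      linarith
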